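/- arXiv:2209.00317 — 4 statements merged into one kernel-verified Lean document; each statement's English description precedes it below -/
import Mathlib

section
/- The power graph of the alternating group Alt(n) (the group of even permutations of an n-element set) is chordal if and only if n ≤ 7. -/
/-- The power graph of a group: distinct `x` and `y` are adjacent iff one is a power
of the other. -/
def powerGraph (G : Type*) [Group G] : SimpleGraph G :=
  SimpleGraph.fromRel (fun x y => x ∈ Subgroup.zpowers y)

/-- A graph is chordal if it has no induced cycle on at least 4 vertices. -/
def IsChordal {V : Type*} (Γ : SimpleGraph V) : Prop :=
  ∀ n : ℕ, 4 ≤ n → IsEmpty (SimpleGraph.cycleGraph n ↪g Γ)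

/-!
Along an induced cycle of length at least 4 in a power graph, `x ∈ ⟨y⟩` cannot hold for two
consecutive steps in the same direction, so the vertices are alternately peaks, having both
neighbours among their powers, and valleys, being powers of both neighbours. The two valleys beside
a peak are incomparable, so the order of a peak is not a prime power.

On at most 7 points, an even permutation whose order is not a prime power only has cycles of length
2 and 3. Of two incomparable powers of such a peak `y` one is the involution `y ^ 3`. That valley
is also `z ^ 3` for the next peak `z`. It moves at least 4 points, so `y ^ 2` and `z ^ 2`
are even permutations of the at most 3 remaining points and generate comparable subgroups. Then
`⟨y⟩` and `⟨z⟩` are comparable too, which is impossible for consecutive peaks.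

On at least 8 points, two 3-cycles generating different subgroups of `Alt {0, 1, 2, 7}` and two
involutions of `Alt {3, 4, 5, 6}` span an induced 8-cycle whose peaks have order 6.
-/

open Equiv Equiv.Perm Subgroup

section PowerComparable

variable {G H : Type*} [Group G] [Group H]

/-- One of `x` and `y` is a power of the other: they are equal or adjacent in the power graph. -/
def PowerComparable (x y : G) : Prop := x ∈ zpowers y ∨ y ∈ zpowers x

theorem powerGraph_adj {x y : G} : (powerGraph G).Adj x y ↔ x ≠ y ∧ PowerComparable x y :=
  Iff.rfl

theorem mem_zpowers_trans {x y z : G} (hxy : x ∈ zpowers y) (hyz : y ∈ zpowers z) :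
    x ∈ zpowers z :=
  zpowers_le.2 hyz hxy

theorem map_mem_zpowers_map_iff {φ : G →* H} (hφ : Function.Injective φ) {x y : G} :
    φ x ∈ zpowers (φ y) ↔ x ∈ zpowers y := by
  rw [← MonoidHom.map_zpowers, mem_map_iff_mem hφ]

theorem PowerComparable.map {x y : G} (h : PowerComparable x y) (φ : G →* H) :
    PowerComparable (φ x) (φ y) := by
  simp only [PowerComparable, ← MonoidHom.map_zpowers]
  exact h.imp (mem_map_of_mem φ) (mem_map_of_mem φ)

theorem mem_zpowers_of_orderOf_dvd {x y z : G} (hy : IsOfFinOrder y) (hx : x ∈ zpowers y)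
    (hz : z ∈ zpowers y) (h : orderOf x ∣ orderOf z) : x ∈ zpowers z := by
  obtain ⟨i, rfl : y ^ i = x⟩ := hy.mem_powers_iff_mem_zpowers.2 hx
  obtain ⟨j, rfl : y ^ j = z⟩ := hy.mem_powers_iff_mem_zpowers.2 hz
  have gcd_mul_orderOf : (orderOf y).gcd j * orderOf (y ^ j) = orderOf y := by
    rw [hy.orderOf_pow, Nat.mul_div_cancel' (Nat.gcd_dvd_left _ _)]
  have gcd_dvd : (orderOf y).gcd j ∣ i := by
    refine Nat.dvd_of_mul_dvd_mul_right (orderOf_pos_iff.2 (hy.pow (n := j))) ?_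
    rw [gcd_mul_orderOf, orderOf_dvd_iff_pow_eq_one, pow_mul, ← orderOf_dvd_iff_pow_eq_one]
    exact h
  have pow_gcd_mem : y ^ (orderOf y).gcd j ∈ zpowers (y ^ j) := by
    rw [← zpow_natCast y (Nat.gcd _ _), Nat.gcd_eq_gcd_ab, zpow_add, zpow_mul, zpow_mul,
      zpow_natCast, pow_orderOf_eq_one, one_zpow, one_mul, zpow_natCast]
    exact zpow_mem_zpowers _ _
  obtain ⟨c, rfl⟩ := gcd_dvd
  exact pow_mul y _ c ▸ pow_mem pow_gcd_mem c

theorem powerComparable_of_orderOf_dvd_prime_pow {x y z : G} {p k : ℕ} (hp : p.Prime)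
    (hy : orderOf y ∣ p ^ k) (hx : x ∈ zpowers y) (hz : z ∈ zpowers y) :
    PowerComparable x z := by
  have hfin : IsOfFinOrder y :=
    orderOf_pos_iff.1 (Nat.pos_of_dvd_of_pos hy (pow_pos hp.pos k))
  obtain ⟨i, -, hi⟩ := (Nat.dvd_prime_pow hp).1 ((orderOf_dvd_of_mem_zpowers hx).trans hy)
  obtain ⟨j, -, hj⟩ := (Nat.dvd_prime_pow hp).1 ((orderOf_dvd_of_mem_zpowers hz).trans hy)
  refine (le_total i j).imp (fun hij => ?_) (fun hji => ?_)
  · exact mem_zpowers_of_orderOf_dvd hfin hx hz (hi ▸ hj ▸ pow_dvd_pow p hij)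
  · exact mem_zpowers_of_orderOf_dvd hfin hz hx (hi ▸ hj ▸ pow_dvd_pow p hji)

theorem orderOf_eq_two_of_not_powerComparable {x y z : G} (hy : y ^ 6 = 1) (hx : x ∈ zpowers y)
    (hz : z ∈ zpowers y) (h : ¬PowerComparable x z) : orderOf x = 2 ∨ orderOf z = 2 := by
  have hfin : IsOfFinOrder y := isOfFinOrder_iff_pow_eq_one.2 ⟨6, by norm_num, hy⟩
  have orderOf_mem {w : G} (hw : w ∈ zpowers y) : orderOf w ∈ Nat.divisors 6 :=
    Nat.mem_divisors.2
      ⟨(orderOf_dvd_of_mem_zpowers hw).trans (orderOf_dvd_of_pow_eq_one hy), by norm_num⟩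
  have hxz : ¬orderOf x ∣ orderOf z := fun hd => h (.inl (mem_zpowers_of_orderOf_dvd hfin hx hz hd))
  have hzx : ¬orderOf z ∣ orderOf x := fun hd => h (.inr (mem_zpowers_of_orderOf_dvd hfin hz hx hd))
  have divisors_six : ∀ a ∈ Nat.divisors 6, ∀ b ∈ Nat.divisors 6, ¬a ∣ b → ¬b ∣ a →
      a = 2 ∨ b = 2 := by decide
  exact divisors_six _ (orderOf_mem hx) _ (orderOf_mem hz) hxz hzx

theorem eq_one_or_eq_of_mem_zpowers_of_sq_eq_one {x y : G} (hy : y ^ 2 = 1)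
    (hx : x ∈ zpowers y) : x = 1 ∨ x = y := by
  obtain ⟨k, rfl⟩ := hx
  have hy' : y ^ (2 : ℤ) = 1 := mod_cast hy
  obtain ⟨j, rfl | rfl⟩ := k.even_or_odd'
  · exact .inl (by simp [zpow_mul, hy'])
  · exact .inr (by simp [zpow_add, zpow_mul, hy'])

theorem eq_pow_three_of_orderOf_eq_two {b y : G} (hy : y ^ 6 = 1) (hb : orderOf b = 2)
    (hby : b ∈ zpowers y) : b = y ^ 3 := by
  obtain ⟨hsq, hne⟩ := orderOf_eq_prime_iff.1 hb
  obtain ⟨k, rfl : y ^ k = b⟩ := hby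
  have hmem : y ^ k ∈ zpowers (y ^ 3) := by
    refine mem_zpowers_iff.2 ⟨k, ?_⟩
    calc (y ^ 3) ^ k = (y ^ k) ^ 2 * y ^ k := by group
      _ = y ^ k := by rw [hsq, one_mul]
  refine (eq_one_or_eq_of_mem_zpowers_of_sq_eq_one ?_ hmem).resolve_left hne
  rw [← pow_mul, hy]

theorem mem_zpowers_of_sq_mem_of_cube_eq {y z : G} (hsq : y ^ 2 ∈ zpowers (z ^ 2))
    (hcube : y ^ 3 = z ^ 3) : y ∈ zpowers z := by
  have hy : z ^ 3 * (y ^ 2)⁻¹ = y := by rw [← hcube]; group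
  rw [← hy]
  exact mul_mem (npow_mem_zpowers z 3) (inv_mem (mem_zpowers_trans hsq (npow_mem_zpowers z 2)))

end PowerComparable

section Chordal

variable {V W : Type*} {Γ : SimpleGraph V} {Δ : SimpleGraph W}

theorem IsChordal.of_embedding (h : IsChordal Δ) (e : Γ ↪g Δ) : IsChordal Γ :=
  fun n hn => ⟨fun f => (h n hn).false (e.comp f)⟩

theorem IsChordal.powerGraph_of_injective {G H : Type*} [Group G] [Group H]
    (h : IsChordal (powerGraph H)) {φ : G →* H} (hφ : Function.Injective φ) :
    IsChordal (powerGraph G) :=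
  h.of_embedding ⟨⟨φ, hφ⟩, by
    simp [powerGraph_adj, PowerComparable, map_mem_zpowers_map_iff hφ, hφ.ne_iff]⟩

theorem cycleGraph_adj_add_one {n : ℕ} (i : Fin (n + 2)) :
    (SimpleGraph.cycleGraph (n + 2)).Adj i (i + 1) :=
  SimpleGraph.cycleGraph_adj.2 (.inr (add_sub_cancel_left i 1))

theorem not_cycleGraph_adj_add_two {n : ℕ} (i : Fin (n + 4)) :
    ¬(SimpleGraph.cycleGraph (n + 4)).Adj i (i + 2) := by
  rw [SimpleGraph.cycleGraph_adj, sub_add_cancel_left, add_sub_cancel_left, neg_eq_iff_add_eq_zero]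
  simp [Fin.ext_iff, Fin.val_add, Nat.mod_eq_of_lt]

end Chordal

section Criterion

variable {G : Type*} [Group G]

theorem exists_seq_of_not_isChordal_powerGraph (h : ¬IsChordal (powerGraph G)) :
    ∃ v : ℕ → G, (∀ i, PowerComparable (v i) (v (i + 1))) ∧
      ∀ i, ¬PowerComparable (v i) (v (i + 2)) := by
  simp only [IsChordal, not_forall, not_isEmpty_iff] at h
  obtain ⟨n, hn, ⟨f⟩⟩ := h
  obtain ⟨m, rfl⟩ := Nat.exists_eq_add_of_le' hn
  refine ⟨fun i => f (i • 1), fun i => ?_, fun i hi => ?_⟩ <;> beta_reduce at *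
  · rw [add_nsmul, one_nsmul]
    exact (powerGraph_adj.1 (f.map_adj_iff.2 (cycleGraph_adj_add_one _))).2
  · have hstep : ((i + 2) • 1 : Fin (m + 4)) = i • 1 + 2 := by rw [add_nsmul]; rfl
    have hne : (i • 1 : Fin (m + 4)) ≠ i • 1 + 2 := by simp [Fin.ext_iff, Nat.mod_eq_of_lt]
    rw [hstep] at hi
    exact not_cycleGraph_adj_add_two _ (f.map_adj_iff.1 ⟨f.injective.ne hne, hi⟩)

theorem isChordal_powerGraph_of_hinge (Top Hinge : G → Prop)
    (top_and_hinge : ∀ x y z, x ∈ zpowers y → z ∈ zpowers y → ¬PowerComparable x z →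
      Top y ∧ (Hinge x ∨ Hinge z))
    (comparable_tops : ∀ b y z, Hinge b → b ∈ zpowers y → b ∈ zpowers z → Top y → Top z →
      PowerComparable y z) :
    IsChordal (powerGraph G) := by
  by_contra h
  obtain ⟨v, comparable, incomparable⟩ := exists_seq_of_not_isChordal_powerGraph h
  -- The relation `v k ∈ zpowers (v (k + 1))` holds at every second `k`, so the cycle consists of
  -- alternating peaks and valleys, and of the two valleys beside a peak one is a hinge.
  have fall_of_rise {k} (hk : v k ∈ zpowers (v (k + 1))) : v (k + 2) ∈ zpowers (v (k + 1)) :=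
    (comparable (k + 1)).resolve_left
      fun h => incomparable k (.inl (mem_zpowers_trans hk h))
  have rise_of_fall {k} (hk : v (k + 1) ∈ zpowers (v k)) : v (k + 1) ∈ zpowers (v (k + 2)) :=
    (comparable (k + 1)).resolve_right
      fun h => incomparable k (.inr (mem_zpowers_trans h hk))
  have rise_add_two {k} (hk : v k ∈ zpowers (v (k + 1))) : v (k + 2) ∈ zpowers (v (k + 3)) :=
    rise_of_fall (fall_of_rise hk)
  have top_hinge {k} (hk : v k ∈ zpowers (v (k + 1))) :=
    top_and_hinge _ _ _ hk (fall_of_rise hk) (incomparable k)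
  have not_hinge {k} (hk : v k ∈ zpowers (v (k + 1))) : ¬Hinge (v (k + 2)) := fun hb =>
    incomparable (k + 1) <| comparable_tops _ _ _ hb (fall_of_rise hk) (rise_add_two hk)
      (top_hinge hk).1 (top_hinge (rise_add_two hk)).1
  obtain ⟨k, hk⟩ : ∃ k, v k ∈ zpowers (v (k + 1)) :=
    (comparable 0).elim (fun h => ⟨0, h⟩) (fun h => ⟨1, rise_of_fall h⟩)
  exact (top_hinge (rise_add_two hk)).2.elim (not_hinge hk) (not_hinge (rise_add_two hk))

end Criterion

section EightCycle

variable {G : Type*} [Group G] {m n : ℕ}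

theorem exists_forall_commute_mul_pow_eq_left (hmn : m.Coprime n) :
    ∃ e : ℕ, ∀ c d : G, Commute c d → c ^ m = 1 → d ^ n = 1 → (c * d) ^ e = c := by
  obtain ⟨e, hem, hen⟩ := Nat.chineseRemainder hmn 1 0
  refine ⟨e, fun c d hcd hc hd => ?_⟩
  have hce : c ^ e = c := by
    simpa using pow_eq_pow_iff_modEq.2 (hem.of_dvd (orderOf_dvd_of_pow_eq_one hc))
  have hde : d ^ e = 1 := by
    simpa using pow_eq_pow_iff_modEq.2 (hen.of_dvd (orderOf_dvd_of_pow_eq_one hd))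
  rw [hcd.mul_pow, hce, hde, mul_one]

theorem left_mem_zpowers_mul {c d : G} (hmn : m.Coprime n) (hcd : Commute c d) (hc : c ^ m = 1)
    (hd : d ^ n = 1) : c ∈ zpowers (c * d) := by
  obtain ⟨e, he⟩ := exists_forall_commute_mul_pow_eq_left (G := G) hmn
  exact mem_zpowers_iff.2 ⟨e, by rw [zpow_natCast, he c d hcd hc hd]⟩

theorem left_mem_zpowers_of_mul_mem_zpowers_mul {a b c d : G} (hmn : m.Coprime n)
    (hab : Commute a b) (hcd : Commute c d) (ha : a ^ m = 1) (hb : b ^ n = 1) (hc : c ^ m = 1)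
    (hd : d ^ n = 1) (h : a * b ∈ zpowers (c * d)) : a ∈ zpowers c := by
  obtain ⟨e, he⟩ := exists_forall_commute_mul_pow_eq_left (G := G) hmn
  obtain ⟨k, hk : (c * d) ^ k = a * b⟩ := h
  refine ⟨k, ?_⟩
  calc c ^ k = ((c * d) ^ e) ^ k := by rw [he c d hcd hc hd]
    _ = ((c * d) ^ k) ^ e := by rw [← zpow_natCast, ← zpow_natCast, zpow_comm]
    _ = a := by rw [hk, he a b hab ha hb]

theorem mul_mem_zpowers_mul_iff {a b c d : G} (hmn : m.Coprime n)
    (hab : Commute a b) (hcd : Commute c d) (ha : a ^ m = 1) (hb : b ^ n = 1) (hc : c ^ m = 1)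
    (hd : d ^ n = 1) : a * b ∈ zpowers (c * d) ↔ a ∈ zpowers c ∧ b ∈ zpowers d := by
  refine ⟨fun h => ⟨?_, ?_⟩, fun ⟨hac, hbd⟩ => ?_⟩
  · exact left_mem_zpowers_of_mul_mem_zpowers_mul hmn hab hcd ha hb hc hd h
  · rw [hab.eq, hcd.eq] at h
    exact left_mem_zpowers_of_mul_mem_zpowers_mul hmn.symm hab.symm hcd.symm hb ha hd hc h
  · have hc' : c ∈ zpowers (c * d) := left_mem_zpowers_mul hmn hcd hc hd
    have hd' : d ∈ zpowers (c * d) := hcd.eq ▸ left_mem_zpowers_mul hmn.symm hcd.symm hd hc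
    exact mul_mem (mem_zpowers_trans hac hc') (mem_zpowers_trans hbd hd')

theorem vecCons_one_mem_zpowers_iff {a₁ a₂ : G} (h : ¬PowerComparable a₁ a₂) (i j : Fin 3) :
    ![1, a₁, a₂] i ∈ zpowers (![1, a₁, a₂] j) ↔ i = 0 ∨ i = j := by
  obtain ⟨ha₁₂, ha₂₁⟩ := not_or.1 h
  have ha₁ : a₁ ≠ 1 := by rintro rfl; exact ha₁₂ (one_mem _)
  have ha₂ : a₂ ≠ 1 := by rintro rfl; exact ha₂₁ (one_mem _)
  fin_cases i <;> fin_cases j <;> simp [*, one_mem]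

/-- The relation of being a power among the products `u * w` with `u` an entry of `![1, a₁, a₂]`
and `w` an entry of `![1, b₁, b₂]`, when neither of `a₁`, `a₂` and neither of `b₁`, `b₂` is a
power of the other. A product is encoded by the pair of positions of its two factors. -/
def IndexLE (p q : Fin 3 × Fin 3) : Prop := (p.1 = 0 ∨ p.1 = q.1) ∧ (p.2 = 0 ∨ p.2 = q.2)

instance : DecidableRel IndexLE := fun _ _ => inferInstanceAs (Decidable (_ ∧ _))

/-- The pairs of indices of the 8-cycle `a₁, a₁b₁, b₁, a₂b₁, a₂, a₂b₂, b₂, a₁b₂`. -/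
def octagon : Fin 8 → Fin 3 × Fin 3 :=
  ![(1, 0), (1, 1), (0, 1), (2, 1), (2, 0), (2, 2), (0, 2), (1, 2)]

theorem cycleGraph_eight_adj_iff_octagon {i j : Fin 8} : (SimpleGraph.cycleGraph 8).Adj i j ↔
    i ≠ j ∧ (IndexLE (octagon i) (octagon j) ∨ IndexLE (octagon j) (octagon i)) := by
  rw [SimpleGraph.cycleGraph_adj]
  decide +revert

theorem eq_of_indexLE_octagon {i j : Fin 8} (hij : IndexLE (octagon i) (octagon j))
    (hji : IndexLE (octagon j) (octagon i)) : i = j := by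
  decide +revert

theorem not_isChordal_powerGraph_of_commute {a₁ a₂ b₁ b₂ : G} (hmn : m.Coprime n)
    (ha₁ : a₁ ^ m = 1) (ha₂ : a₂ ^ m = 1) (hb₁ : b₁ ^ n = 1) (hb₂ : b₂ ^ n = 1)
    (hab₁₁ : Commute a₁ b₁) (hab₁₂ : Commute a₁ b₂) (hab₂₁ : Commute a₂ b₁) (hab₂₂ : Commute a₂ b₂)
    (ha_incomp : ¬PowerComparable a₁ a₂) (hb_incomp : ¬PowerComparable b₁ b₂) :
    ¬IsChordal (powerGraph G) := by
  have hu (i : Fin 3) : ![1, a₁, a₂] i ^ m = 1 := by fin_cases i <;> simp [ha₁, ha₂]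
  have hw (j : Fin 3) : ![1, b₁, b₂] j ^ n = 1 := by fin_cases j <;> simp [hb₁, hb₂]
  have huw (i j : Fin 3) : Commute (![1, a₁, a₂] i) (![1, b₁, b₂] j) := by
    fin_cases i <;> fin_cases j <;> simp [*]
  let f (i : Fin 8) : G := ![1, a₁, a₂] (octagon i).1 * ![1, b₁, b₂] (octagon i).2
  have mem_iff (i j : Fin 8) : f i ∈ zpowers (f j) ↔ IndexLE (octagon i) (octagon j) := by
    rw [mul_mem_zpowers_mul_iff hmn (huw _ _) (huw _ _) (hu _) (hw _) (hu _) (hw _),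
      vecCons_one_mem_zpowers_iff ha_incomp, vecCons_one_mem_zpowers_iff hb_incomp, IndexLE]
  have f_injective : Function.Injective f := fun i j hij =>
    eq_of_indexLE_octagon ((mem_iff i j).1 (hij ▸ mem_zpowers _))
      ((mem_iff j i).1 (hij ▸ mem_zpowers _))
  intro h
  refine (h 8 (by norm_num)).false ⟨⟨f, f_injective⟩, fun {i j} => ?_⟩
  rw [cycleGraph_eight_adj_iff_octagon, ← mem_iff, ← mem_iff, ← f_injective.ne_iff]
  exact powerGraph_adj

end EightCycle

section Perm

variable {α : Type*}

theorem notMem_zpowers_of_apply_eq_self {H : Subgroup (Perm α)} {σ τ : H} {x : α}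
    (hσ : (σ : Perm α) x ≠ x) (hτ : (τ : Perm α) x = x) : σ ∉ zpowers τ := by
  rintro ⟨k, rfl⟩
  exact hσ (zpow_apply_eq_self_of_apply_eq_self hτ k)

variable [Fintype α] [DecidableEq α]

theorem disjoint_pow_pow_of_forall_mem_cycleType {σ : Perm α} {a b : ℕ}
    (h : ∀ k ∈ σ.cycleType, k ∣ a ∨ k ∣ b) : Disjoint (σ ^ a) (σ ^ b) := by
  intro x
  by_cases hx : σ x = x
  · exact .inl (pow_apply_eq_self_of_apply_eq_self hx a)
  have hmem : (σ.cycleOf x).support.card ∈ σ.cycleType := by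
    rw [cycleType_def]
    exact Multiset.mem_map_of_mem _ (cycleOf_mem_cycleFactorsFinset_iff.2 (mem_support.2 hx))
  have pow_apply_of_dvd {c : ℕ} (hc : (σ.cycleOf x).support.card ∣ c) : (σ ^ c) x = x := by
    rw [← pow_mod_card_support_cycleOf_self_apply, Nat.mod_eq_zero_of_dvd hc, pow_zero, one_apply]
  exact (h _ hmem).imp pow_apply_of_dvd pow_apply_of_dvd

theorem four_le_card_support_of_sq_eq_one {σ : Perm α} (hsign : sign σ = 1) (hσ : σ ^ 2 = 1)
    (hne : σ ≠ 1) : 4 ≤ σ.support.card := by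
  have htwo : σ.support.card ≠ 2 := fun h => by
    simp [(card_support_eq_two.1 h).sign_eq] at hsign
  have hpos : σ.support.card ≠ 0 := by simpa using hne
  have := two_dvd_card_support hσ
  omega

theorem isPrimePow_orderOf_of_three_lt {σ : Perm α} (hα : Fintype.card α ≤ 7)
    (hsign : sign σ = 1) {k : ℕ} (hk : k ∈ σ.cycleType) (hk3 : 3 < k) :
    IsPrimePow (orderOf σ) := by
  have hsum : σ.cycleType.sum ≤ 7 := (sum_cycleType_le σ).trans hα
  have hparity : Even (σ.cycleType.sum + σ.cycleType.card) := by
    rwa [sign_of_cycleType, neg_one_pow_eq_one_iff_even (by decide)] at hsign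
  have htwo_le : ∀ l ∈ σ.cycleType, 2 ≤ l := fun l => two_le_of_mem_cycleType
  rw [← lcm_cycleType]
  obtain ⟨t, ht⟩ := Multiset.exists_cons_of_mem hk
  rw [ht] at hsum hparity htwo_le ⊢
  rcases t.empty_or_exists_mem with rfl | ⟨l, hl⟩
  · have : k = 5 ∨ k = 7 := by
      simp only [Multiset.cons_zero, Multiset.sum_singleton, Multiset.card_singleton,
        Nat.even_iff] at hsum hparity
      omega
    rcases this with rfl | rfl
    · simpa using Nat.prime_five.isPrimePow
    · simpa using Nat.prime_seven.isPrimePow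
  obtain ⟨r, rfl⟩ := Multiset.exists_cons_of_mem hl
  have hl2 : 2 ≤ l := htwo_le l (by simp)
  rcases r.empty_or_exists_mem with rfl | ⟨j, hj⟩
  · have : k = 4 ∧ l = 2 := by
      simp only [Multiset.cons_zero, Multiset.sum_cons, Multiset.sum_singleton,
        Multiset.card_cons, Multiset.card_singleton, Nat.even_iff] at hsum hparity
      omega
    obtain ⟨rfl, rfl⟩ := this
    exact ⟨2, 2, Nat.prime_two.prime, by decide⟩
  · have hj2 : 2 ≤ j := htwo_le j (by simp [hj])
    have hjr : j ≤ r.sum := Multiset.le_sum_of_mem hj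
    simp only [Multiset.sum_cons] at hsum
    omega

theorem natCard_alternatingGroup_dvd_three (hα : Nat.card α ≤ 3) :
    Nat.card (alternatingGroup α) ∣ 3 := by
  cases subsingleton_or_nontrivial α
  · rw [Nat.card_unique]
    exact one_dvd 3
  have : 1 < Nat.card α := Finite.one_lt_card
  rw [nat_card_alternatingGroup]
  interval_cases Nat.card α <;> decide

theorem powerComparable_of_support_subset {σ τ : alternatingGroup α} {s : Finset α}
    (hs : s.card ≤ 3) (hσ : (σ : Perm α).support ⊆ s) (hτ : (τ : Perm α).support ⊆ s) :
    PowerComparable σ τ := by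
  obtain ⟨σ, rfl⟩ := (alternatingGroup.mem_range_ofSubtype_iff s σ).2 hσ
  obtain ⟨τ, rfl⟩ := (alternatingGroup.mem_range_ofSubtype_iff s τ).2 hτ
  have hcard : Nat.card s ≤ 3 := by simpa using hs
  obtain ⟨g, hg⟩ := (alternatingGroup.isCyclic_of_card_le_three hcard).exists_generator
  refine PowerComparable.map ?_ _
  refine powerComparable_of_orderOf_dvd_prime_pow (k := 1) Nat.prime_three ?_ (hg σ) (hg τ)
  rw [orderOf_eq_card_of_forall_mem_zpowers hg, pow_one]
  exact natCard_alternatingGroup_dvd_three hcard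

theorem card_compl_support_le_three {σ : alternatingGroup α} (hα : Fintype.card α ≤ 7)
    (hσ : orderOf σ = 2) : (σ : Perm α).supportᶜ.card ≤ 3 := by
  obtain ⟨hsq, hne⟩ := orderOf_eq_prime_iff.1 hσ
  have hfour : 4 ≤ (σ : Perm α).support.card :=
    four_le_card_support_of_sq_eq_one σ.2 (congrArg Subtype.val hsq) (by simpa using hne)
  rw [Finset.card_compl]
  omega

theorem support_sq_subset_compl_support_cube {σ : Perm α} (h : ∀ k ∈ σ.cycleType, k ≤ 3) :
    (σ ^ 2).support ⊆ (σ ^ 3).supportᶜ := by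
  refine (Disjoint.disjoint_support (disjoint_pow_pow_of_forall_mem_cycleType ?_)).le_compl_right
  intro k hk
  have hk2 := two_le_of_mem_cycleType hk
  have hk3 := h k hk
  interval_cases k <;> decide

theorem pow_six_eq_one_of_forall_mem_cycleType_le_three {σ : Perm α}
    (h : ∀ k ∈ σ.cycleType, k ≤ 3) : σ ^ 6 = 1 := by
  rw [← orderOf_dvd_iff_pow_eq_one, ← lcm_cycleType, Multiset.lcm_dvd]
  intro k hk
  have hk2 := two_le_of_mem_cycleType hk
  have hk3 := h k hk
  interval_cases k <;> decide

theorem powerComparable_of_orderOf_eq_two {b y z : alternatingGroup α} (hα : Fintype.card α ≤ 7)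
    (hb : orderOf b = 2) (hby : b ∈ zpowers y) (hbz : b ∈ zpowers z)
    (hy : ∀ k ∈ (y : Perm α).cycleType, k ≤ 3) (hz : ∀ k ∈ (z : Perm α).cycleType, k ≤ 3) :
    PowerComparable y z := by
  have cube_eq {w : alternatingGroup α} (hbw : b ∈ zpowers w)
      (hw : ∀ k ∈ (w : Perm α).cycleType, k ≤ 3) : w ^ 3 = b :=
    (eq_pow_three_of_orderOf_eq_two
      (Subtype.ext (pow_six_eq_one_of_forall_mem_cycleType_le_three hw)) hb hbw).symm
  have support_sq_subset {w : alternatingGroup α} (hbw : b ∈ zpowers w)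
      (hw : ∀ k ∈ (w : Perm α).cycleType, k ≤ 3) :
      ((w ^ 2 : alternatingGroup α) : Perm α).support ⊆ (b : Perm α).supportᶜ := by
    rw [← cube_eq hbw hw]
    exact support_sq_subset_compl_support_cube hw
  have hcube : y ^ 3 = z ^ 3 := (cube_eq hby hy).trans (cube_eq hbz hz).symm
  have hsq : PowerComparable (y ^ 2) (z ^ 2) :=
    powerComparable_of_support_subset (card_compl_support_le_three hα hb)
      (support_sq_subset hby hy) (support_sq_subset hbz hz)
  exact hsq.imp (mem_zpowers_of_sq_mem_of_cube_eq · hcube)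
    (mem_zpowers_of_sq_mem_of_cube_eq · hcube.symm)

theorem isChordal_powerGraph_alternatingGroup (hα : Fintype.card α ≤ 7) :
    IsChordal (powerGraph (alternatingGroup α)) := by
  refine isChordal_powerGraph_of_hinge (fun y => ∀ k ∈ (y : Perm α).cycleType, k ≤ 3)
    (fun b => orderOf b = 2) (fun x y z hx hz hxz => ?_)
    (fun b y z => powerComparable_of_orderOf_eq_two hα)
  have hy : ∀ k ∈ (y : Perm α).cycleType, k ≤ 3 := by
    by_contra! ⟨k, hk, hk3⟩
    obtain ⟨p, e, hp, -, he⟩ := isPrimePow_orderOf_of_three_lt hα y.2 hk hk3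
    rw [Subgroup.orderOf_coe] at he
    exact hxz (powerComparable_of_orderOf_dvd_prime_pow hp.nat_prime he.symm.dvd hx hz)
  exact ⟨hy, orderOf_eq_two_of_not_powerComparable
    (Subtype.ext (pow_six_eq_one_of_forall_mem_cycleType_le_three hy)) hx hz hxz⟩

theorem not_isChordal_powerGraph_alternatingGroup_fin_eight :
    ¬IsChordal (powerGraph (alternatingGroup (Fin 8))) := by
  let a₁ : alternatingGroup (Fin 8) := ⟨c[0, 1, 2], mem_alternatingGroup.2 (by decide)⟩
  let a₂ : alternatingGroup (Fin 8) := ⟨c[0, 1, 7], mem_alternatingGroup.2 (by decide)⟩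
  let b₁ : alternatingGroup (Fin 8) := ⟨c[3, 4] * c[5, 6], mem_alternatingGroup.2 (by decide)⟩
  let b₂ : alternatingGroup (Fin 8) := ⟨c[3, 5] * c[4, 6], mem_alternatingGroup.2 (by decide)⟩
  have ha_incomp : ¬PowerComparable a₁ a₂ := by
    rintro (h | h)
    · exact notMem_zpowers_of_apply_eq_self (x := 2) (by decide) (by decide) h
    · exact notMem_zpowers_of_apply_eq_self (x := 7) (by decide) (by decide) h
  have hb_incomp : ¬PowerComparable b₁ b₂ := by
    rintro (h | h)
    · exact absurd (eq_one_or_eq_of_mem_zpowers_of_sq_eq_one (by decide) h) (by decide)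
    · exact absurd (eq_one_or_eq_of_mem_zpowers_of_sq_eq_one (by decide) h) (by decide)
  have hab₁₁ : a₁ * b₁ = b₁ * a₁ := by decide
  have hab₁₂ : a₁ * b₂ = b₂ * a₁ := by decide
  have hab₂₁ : a₂ * b₁ = b₁ * a₂ := by decide
  have hab₂₂ : a₂ * b₂ = b₂ * a₂ := by decide
  exact not_isChordal_powerGraph_of_commute (by decide : Nat.Coprime 3 2) (by decide) (by decide)
    (by decide) (by decide) hab₁₁ hab₁₂ hab₂₁ hab₂₂ ha_incomp hb_incomp

theorem not_isChordal_powerGraph_alternatingGroup (hα : 8 ≤ Fintype.card α) :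
    ¬IsChordal (powerGraph (alternatingGroup α)) := by
  obtain ⟨s, -, hs⟩ := Finset.exists_subset_card_eq (s := Finset.univ) hα
  let e : Fin 8 ≃ s := (s.equivFinOfCardEq hs).symm
  intro h
  exact not_isChordal_powerGraph_alternatingGroup_fin_eight <|
    h.powerGraph_of_injective (φ := (alternatingGroup.ofSubtype s).comp e.altCongrHom)
      (alternatingGroup.ofSubtype_injective.comp e.altCongrHom.injective)

end Perm

theorem stmt4_general {α : Type*} [Fintype α] [DecidableEq α] :
    IsChordal (powerGraph (alternatingGroup α)) ↔ Fintype.card α ≤ 7 :=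
  ⟨fun h => by_contra fun hα => not_isChordal_powerGraph_alternatingGroup (by omega) h,
    isChordal_powerGraph_alternatingGroup⟩

theorem stmt4 (n : ℕ) : IsChordal (powerGraph (alternatingGroup (Fin n))) ↔ n ≤ 7 := by
  simpa using stmt4_general (α := Fin n)
end

section
/- Let F be a finite field with q elements and let PSL₂(q) denote the quotient of the special linear group SL₂(F) by its center. If the power graph of PSL₂(q) is chordal, then each of the two numbers (q−1)/gcd(q−1, 2) and (q+1)/gcd(q+1, 2) has at most two distinct prime divisors and at most one prime divisor p with p² dividing it (i.e., if p² and p'² both divide the number for primes p, p', then p = p'). -/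
/-- The projective special linear group `PSL_n(F)`: the quotient of `SL_n(F)` by its center. -/
abbrev PSL (n : ℕ) (F : Type*) [Field F] :=
  Matrix.SpecialLinearGroup (Fin n) F ⧸ Subgroup.center (Matrix.SpecialLinearGroup (Fin n) F)

/-- `m` has at most two distinct prime divisors and at most one prime divisor with
multiplicity greater than one. -/
def GoodNumber (m : ℕ) : Prop :=
  m.primeFactors.card ≤ 2 ∧
    ∀ p p' : ℕ, p.Prime → p'.Prime → p ^ 2 ∣ m → p' ^ 2 ∣ m → p = p'

/-!
If `g` has finite order `N`, then `d ∣ e ↔ g ^ (N / d) ∈ ⟨g ^ (N / e)⟩` for all divisors `d`, `e`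
of `N`. Hence, if `pᵢ ^ k ∣ N` for distinct primes `pᵢ`, the comparability graph of the grid
of exponent vectors with entries in `{0, …, k}` embeds in the power graph. The grid `{0, 1}³`
contains an induced hexagon and the grid `{0, 1, 2}²` an induced square, so in a group with chordal
power graph every element of finite order has good order.

The centre of `SLₙ(F)` has exponent dividing `n`, so the image in `PSLₙ(F)` of an element of order
`m` has order divisible by `m / gcd(m, n)`. The theorem follows from the existence in `SL₂(F)` of
elements of order `q - 1` (the split torus) and `q + 1` (a Singer cycle: multiplication by an
element of norm one of the quadratic extension).
-/

/-- The comparability graph of an order: distinct elements are adjacent iff one is below the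
other. It is applied to grids of exponent vectors, where the order encodes divisibility. -/
def comparabilityGraph (α : Type*) [LE α] : SimpleGraph α :=
  SimpleGraph.fromRel (· ≤ ·)

theorem IsChordal.of_embedding_s5 {V W : Type*} {Γ : SimpleGraph V} {Δ : SimpleGraph W}
    (f : Γ ↪g Δ) (hΔ : IsChordal Δ) : IsChordal Γ :=
  fun n hn => ⟨fun cycle => (hΔ n hn).false (f.comp cycle)⟩

theorem not_isChordal_comparabilityGraph_cube :
    ¬ IsChordal (comparabilityGraph (Fin 3 → Fin 2)) := by
  let hexagon : Fin 6 → Fin 3 → Fin 2 :=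
    ![![1, 0, 0], ![1, 1, 0], ![0, 1, 0], ![0, 1, 1], ![0, 0, 1], ![1, 0, 1]]
  have adj_iff : ∀ i j, (comparabilityGraph (Fin 3 → Fin 2)).Adj (hexagon i) (hexagon j) ↔
      (SimpleGraph.cycleGraph 6).Adj i j := by
    simp only [comparabilityGraph, SimpleGraph.fromRel_adj, SimpleGraph.cycleGraph_adj',
      Pi.le_def]
    decide
  exact fun h => (h 6 (by norm_num)).false ⟨⟨hexagon, by decide⟩, adj_iff _ _⟩

theorem not_isChordal_comparabilityGraph_three_by_three :
    ¬ IsChordal (comparabilityGraph (Fin 2 → Fin 3)) := by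
  let square : Fin 4 → Fin 2 → Fin 3 := ![![1, 0], ![2, 1], ![0, 1], ![1, 2]]
  have adj_iff : ∀ i j, (comparabilityGraph (Fin 2 → Fin 3)).Adj (square i) (square j) ↔
      (SimpleGraph.cycleGraph 4).Adj i j := by
    simp only [comparabilityGraph, SimpleGraph.fromRel_adj, SimpleGraph.cycleGraph_adj',
      Pi.le_def]
    decide
  exact fun h => (h 4 le_rfl).false ⟨⟨square, by decide⟩, adj_iff _ _⟩

section PrimePowers

variable {ι : Type*} [Fintype ι] {p : ι → ℕ}

theorem prod_prime_pow_dvd_prod_prime_pow_iff (hp : ∀ i, (p i).Prime)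
    (hinj : Function.Injective p) (v w : ι → ℕ) :
    ∏ i, p i ^ v i ∣ ∏ i, p i ^ w i ↔ v ≤ w := by
  classical
  have prod_ne_zero (u : ι → ℕ) : ∏ i, p i ^ u i ≠ 0 :=
    Finset.prod_ne_zero_iff.2 fun i _ => pow_ne_zero _ (hp i).ne_zero
  have factorization_eq (u : ι → ℕ) (i : ι) :
      (∏ j, p j ^ u j).factorization (p i) = u i := by
    rw [Nat.factorization_prod_apply fun j _ => pow_ne_zero _ (hp j).ne_zero]
    simp [(hp _).factorization, Finsupp.single_apply, hinj.eq_iff]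
  refine ⟨fun h i => ?_, fun h => Finset.prod_dvd_prod_of_dvd _ _ fun i _ => pow_dvd_pow _ (h i)⟩
  simpa only [factorization_eq] using
    (Nat.factorization_le_iff_dvd (prod_ne_zero v) (prod_ne_zero w)).2 h (p i)

theorem prod_prime_pow_dvd {m : ℕ} (hp : ∀ i, (p i).Prime) (hinj : Function.Injective p)
    {v : ι → ℕ} (hdvd : ∀ i, p i ^ v i ∣ m) : ∏ i, p i ^ v i ∣ m :=
  Fintype.prod_dvd_of_isRelPrime
    (fun i j hij => Nat.coprime_iff_isRelPrime.1 <|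
      ((Nat.coprime_primes (hp i) (hp j)).2 (hinj.ne hij)).pow _ _) hdvd

end PrimePowers

section PowerGraph

variable {G : Type*} [Group G] {g : G}

theorem pow_orderOf_div_mem_zpowers_iff (hg : IsOfFinOrder g) {d e : ℕ}
    (hd : d ∣ orderOf g) (he : e ∣ orderOf g) :
    g ^ (orderOf g / d) ∈ Subgroup.zpowers (g ^ (orderOf g / e)) ↔ d ∣ e := by
  have orderOf_ne_zero := hg.orderOf_pos.ne'
  constructor
  · intro h
    simpa only [orderOf_pow_orderOf_div orderOf_ne_zero, hd, he] using
      orderOf_dvd_of_mem_zpowers h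
  · intro hde
    obtain ⟨k, hk⟩ := Nat.div_dvd_div_left he hde
    rw [hk, pow_mul]
    exact Subgroup.npow_mem_zpowers _ _

theorem nonempty_comparabilityGraph_grid_embedding_powerGraph {ι : Type*} [Finite ι] {p : ι → ℕ}
    {k : ℕ} (hg : IsOfFinOrder g) (hp : ∀ i, (p i).Prime) (hinj : Function.Injective p)
    (hdvd : ∀ i, p i ^ k ∣ orderOf g) :
    Nonempty (comparabilityGraph (ι → Fin (k + 1)) ↪g powerGraph G) := by
  have := Fintype.ofFinite ι
  let divisor (v : ι → Fin (k + 1)) : ℕ := ∏ i, p i ^ (v i : ℕ)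
  let f (v : ι → Fin (k + 1)) : G := g ^ (orderOf g / divisor v)
  have divisor_dvd (v) : divisor v ∣ orderOf g :=
    prod_prime_pow_dvd hp hinj fun i => (pow_dvd_pow _ (v i).is_le).trans (hdvd i)
  have mem_zpowers_iff (v w) : f v ∈ Subgroup.zpowers (f w) ↔ v ≤ w :=
    (pow_orderOf_div_mem_zpowers_iff hg (divisor_dvd v) (divisor_dvd w)).trans
      (prod_prime_pow_dvd_prod_prime_pow_iff hp hinj _ _)
  have f_injective : Function.Injective f := fun v w h =>
    le_antisymm ((mem_zpowers_iff v w).1 (h ▸ Subgroup.mem_zpowers _))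
      ((mem_zpowers_iff w v).1 (h ▸ Subgroup.mem_zpowers _))
  exact ⟨⟨f, f_injective⟩, by
    simp [comparabilityGraph, powerGraph, mem_zpowers_iff, f_injective.eq_iff]⟩

theorem IsChordal.goodNumber_of_dvd_orderOf (hG : IsChordal (powerGraph G))
    (hg : IsOfFinOrder g) {m : ℕ} (hm : m ∣ orderOf g) : GoodNumber m := by
  constructor
  · by_contra! hcard
    obtain ⟨p⟩ : Nonempty (Fin 3 ↪ m.primeFactors) :=
      Function.Embedding.nonempty_of_card_le (by simpa using Nat.succ_le_of_lt hcard)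
    obtain ⟨grid⟩ := nonempty_comparabilityGraph_grid_embedding_powerGraph (k := 1) hg
      (fun i => Nat.prime_of_mem_primeFactors (p i).2) (Subtype.val_injective.comp p.injective)
      (fun i => by simpa using (Nat.dvd_of_mem_primeFactors (p i).2).trans hm)
    exact not_isChordal_comparabilityGraph_cube (hG.of_embedding_s5 grid)
  · intro p p' hp hp' hpm hpm'
    by_contra hne
    obtain ⟨grid⟩ := nonempty_comparabilityGraph_grid_embedding_powerGraph
      (p := ![p, p']) (k := 2) hg (by simp [Fin.forall_fin_two, hp, hp'])
      (by simp [Function.Injective, hne, Ne.symm hne])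
      (by simp [Fin.forall_fin_two, hpm.trans hm, hpm'.trans hm])
    exact not_isChordal_comparabilityGraph_three_by_three (hG.of_embedding_s5 grid)

end PowerGraph

theorem orderOf_dvd_mul_orderOf_mk {G : Type*} [Group G] {N : Subgroup G} [N.Normal] {n : ℕ}
    (hN : ∀ z ∈ N, z ^ n = 1) (g : G) : orderOf g ∣ n * orderOf (g : G ⧸ N) := by
  have pow_mem : g ^ orderOf (g : G ⧸ N) ∈ N := by
    rw [← QuotientGroup.eq_one_iff, QuotientGroup.mk_pow, pow_orderOf_eq_one]
  apply orderOf_dvd_of_pow_eq_one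
  rw [mul_comm, pow_mul, hN _ pow_mem]

theorem pow_card_eq_one_of_mem_center_specialLinearGroup {ι R : Type*} [Fintype ι] [DecidableEq ι]
    [CommRing R] {Z : Matrix.SpecialLinearGroup ι R}
    (hZ : Z ∈ Subgroup.center (Matrix.SpecialLinearGroup ι R)) : Z ^ Fintype.card ι = 1 := by
  obtain ⟨r, hr, hscalar⟩ := Matrix.SpecialLinearGroup.mem_center_iff.1 hZ
  apply Subtype.ext
  rw [Matrix.SpecialLinearGroup.coe_pow, ← hscalar, ← map_pow, hr, map_one,
    Matrix.SpecialLinearGroup.coe_one]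

theorem IsChordal.goodNumber_orderOf_div_gcd {n : ℕ} {F : Type*} [Field F]
    (hPSL : IsChordal (powerGraph (PSL n F))) {A : Matrix.SpecialLinearGroup (Fin n) F}
    (hA : IsOfFinOrder A) : GoodNumber (orderOf A / (orderOf A).gcd n) := by
  have orderOf_dvd : orderOf A ∣ n * orderOf (A : PSL n F) :=
    orderOf_dvd_mul_orderOf_mk
      (fun Z hZ => by simpa using pow_card_eq_one_of_mem_center_specialLinearGroup hZ) A
  refine hPSL.goodNumber_of_dvd_orderOf ((QuotientGroup.mk' _).isOfFinOrder hA) ?_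
  rw [Nat.div_dvd_iff_dvd_mul (Nat.gcd_dvd_left _ _) (Nat.gcd_pos_of_pos_left _ hA.orderOf_pos),
    ← Nat.gcd_mul_right]
  exact Nat.dvd_gcd (dvd_mul_right _ _) orderOf_dvd

theorem orderOf_coe_specialLinearGroup {ι R : Type*} [Fintype ι] [DecidableEq ι] [CommRing R]
    (A : Matrix.SpecialLinearGroup ι R) : orderOf (A : Matrix ι ι R) = orderOf A :=
  orderOf_injective ((Units.coeHom _).comp Matrix.SpecialLinearGroup.toGL)
    Subtype.val_injective A

theorem orderOf_diag2n {ι F : Type*} [Fintype ι] [DecidableEq ι] [Field F] {i j : ι}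
    (hij : i ≠ j) (a : F) (ha : a ≠ 0) :
    orderOf (Matrix.SpecialLinearGroup.diag2n hij a ha) = orderOf a := by
  rw [← orderOf_coe_specialLinearGroup, Matrix.SpecialLinearGroup.diag2n_coe]
  refine orderOf_eq_orderOf_iff.2 fun n => ?_
  rw [Matrix.diagonal_pow, Matrix.diagonal_eq_one, funext_iff]
  constructor
  · intro h
    simpa using h i
  · intro h k
    by_cases hki : k = i <;> by_cases hkj : k = j <;> simp [hki, hkj, h]

theorem exists_ne_zero_orderOf_eq_natCard_sub_one (F : Type*) [Field F] [Finite F] :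
    ∃ a : F, a ≠ 0 ∧ orderOf a = Nat.card F - 1 := by
  obtain ⟨u, hu⟩ := IsCyclic.exists_ofOrder_eq_natCard (α := Fˣ)
  exact ⟨u, u.ne_zero, by rw [orderOf_units, hu, Nat.card_units]⟩

theorem exists_norm_eq_one_orderOf_eq_div (F K : Type*) [Field F] [Field K] [Algebra F K]
    [Finite K] :
    ∃ x : K, Algebra.norm F x = 1 ∧ orderOf x = (Nat.card K - 1) / (Nat.card F - 1) := by
  have : Finite F := .of_injective _ (algebraMap F K).injective
  obtain ⟨a, -, ha⟩ := exists_ne_zero_orderOf_eq_natCard_sub_one K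
  have card_sub_one_dvd : Nat.card F - 1 ∣ orderOf a := by
    rw [ha, ← Nat.card_units, ← Nat.card_units]
    exact Subgroup.card_dvd_of_injective _ (Units.map_injective (algebraMap F K).injective)
  have orderOf_eq : orderOf (a ^ (Nat.card F - 1)) = (Nat.card K - 1) / (Nat.card F - 1) := by
    rw [orderOf_pow_of_dvd (Nat.sub_pos_of_lt Finite.one_lt_card).ne' card_sub_one_dvd, ha]
  refine ⟨a ^ (Nat.card F - 1), (algebraMap F K).injective ?_, orderOf_eq⟩
  rw [FiniteField.algebraMap_norm_eq_pow, ← orderOf_eq, pow_orderOf_eq_one, map_one]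

theorem exists_specialLinearGroup_orderOf_eq_of_norm_eq_one {ι R S : Type*} [Fintype ι]
    [DecidableEq ι] [CommRing R] [Ring S] [Algebra R S] (b : Module.Basis ι R S) {x : S}
    (hx : Algebra.norm R x = 1) :
    ∃ A : Matrix.SpecialLinearGroup ι R, orderOf A = orderOf x := by
  let A : Matrix.SpecialLinearGroup ι R :=
    ⟨Algebra.leftMulMatrix b x, by rw [← Algebra.norm_eq_matrix_det, hx]⟩
  refine ⟨A, ?_⟩
  calc
    orderOf A = orderOf (Algebra.leftMulMatrix b x) := (orderOf_coe_specialLinearGroup A).symm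
    _ = orderOf x := orderOf_injective _ (Algebra.leftMulMatrix_injective b) x

theorem exists_singerCycle_specialLinearGroup (F : Type*) [Field F] [Finite F] (n : ℕ) [NeZero n] :
    ∃ A : Matrix.SpecialLinearGroup (Fin n) F,
      orderOf A = (Nat.card F ^ n - 1) / (Nat.card F - 1) := by
  obtain ⟨p, _⟩ := CharP.exists F
  have : Fact p.Prime := ⟨CharP.char_is_prime F p⟩
  obtain ⟨x, hnorm, horder⟩ :=
    exists_norm_eq_one_orderOf_eq_div F (FiniteField.Extension F p n)
  rw [← FiniteField.natCard_extension F p n, ← horder]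
  exact exists_specialLinearGroup_orderOf_eq_of_norm_eq_one
    (Module.finBasisOfFinrankEq F _ (FiniteField.finrank_extension F p n)) hnorm

theorem stmt5 (F : Type*) [Field F] [Fintype F] (q : ℕ) (hq : Fintype.card F = q)
    (hchordal : IsChordal (powerGraph (PSL 2 F))) :
    GoodNumber ((q - 1) / Nat.gcd (q - 1) 2) ∧ GoodNumber ((q + 1) / Nat.gcd (q + 1) 2) := by
  rw [← Nat.card_eq_fintype_card] at hq
  constructor
  · obtain ⟨a, ha, orderOf_a⟩ := exists_ne_zero_orderOf_eq_natCard_sub_one F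
    rw [← hq, ← orderOf_a, ← orderOf_diag2n (zero_ne_one (α := Fin 2)) a ha]
    exact hchordal.goodNumber_orderOf_div_gcd (isOfFinOrder_of_finite _)
  · obtain ⟨A, hA⟩ := exists_singerCycle_specialLinearGroup F 2
    have orderOf_A : orderOf A = q + 1 := by
      rw [hA, hq, ← Nat.geomSum_eq (hq ▸ Finite.one_lt_card), Finset.sum_range_succ]
      simp [add_comm]
    rw [← orderOf_A]
    exact hchordal.goodNumber_orderOf_div_gcd (isOfFinOrder_of_finite _)
end

section
/- Let F be a finite field whose cardinality q satisfies q ∉ {2, 4}. Then there exist an n ≥ 4 and a graph embedding of the cycle graph on n vertices into the power graph of the special linear group SL₃(F) such that no vertex in the image of the embedding lies in the center of SL₃(F) (i.e., the induced cycle contains no scalar matrix). In particular, the power graph of SL₃(F) is not chordal. -/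
/-!
A hexagon of elements `x₀, …, x₅` of a group, in which exactly the consecutive elements commute and
consecutive elements have coprime orders, yields twelve cyclic subgroups `⟨xᵢ⟩` and `⟨xᵢ, xᵢ₊₁⟩`
whose only inclusions are `⟨xᵢ⟩ ≤ ⟨xᵢ, xᵢ₊₁⟩ ≥ ⟨xᵢ₊₁⟩`; their generators form an induced 12-cycle of
the power graph. The centralizers detect that there are no further inclusions.

In `SL₃` such a hexagon comes from a triangle in the projective plane and a point `o` off its sides:
alternate the homologies with centre `o` whose axes are the sides with the transvections whose
centres are the vertices and whose axes pass through `o`. Such a homology commutes with such a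
transvection iff its axis contains the centre of the transvection. Transvections have order `p`, and
homologies have order prime to `p`. A nontrivial homology in `SL₃` comes from a unit `u` with
`u ^ 3 ≠ 1`, which is what rules out the fields with 2 and 4 elements.
-/

open Matrix Subgroup

section PowerGraph

variable {G : Type*} [Group G]

theorem exists_embedding_powerGraph_of_isCyclic {ι : Type*} {Γ : SimpleGraph ι}
    (H : ι → Subgroup G) (hH : Function.Injective H) (hcyc : ∀ k, IsCyclic (H k))
    (hΓ : SimpleGraph.fromRel (fun k l ↦ H k ≤ H l) = Γ) :
    ∃ e : Γ ↪g powerGraph G, ∀ k, zpowers (e k) = H k := by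
  choose z hz using fun k ↦ (H k).isCyclic_iff_exists_zpowers_eq_top.mp (hcyc k)
  have z_injective : Function.Injective z := fun k l hkl ↦ hH (by rw [← hz, ← hz, hkl])
  refine ⟨⟨⟨z, z_injective⟩, fun {k l} ↦ ?_⟩, hz⟩
  simp only [← hΓ, powerGraph, SimpleGraph.fromRel_adj, Function.Embedding.coeFn_mk, ← hz,
    zpowers_le, z_injective.ne_iff]

theorem mem_zpowers_mul_of_coprime {a b : G} (hab : Commute a b)
    (hcop : (orderOf a).Coprime (orderOf b)) : a ∈ zpowers (a * b) := by
  have hpow : (a * b) ^ orderOf b = a ^ orderOf b := by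
    rw [hab.mul_pow, pow_orderOf_eq_one, mul_one]
  have ha : a ∈ zpowers (a ^ orderOf b) := mem_zpowers_pow_iff.mpr hcop.symm
  exact zpowers_le.mpr (hpow ▸ npow_mem_zpowers (a * b) (orderOf b)) ha

theorem isCyclic_closure_pair_of_coprime {a b : G} (hab : Commute a b)
    (hcop : (orderOf a).Coprime (orderOf b)) : IsCyclic (closure {a, b}) := by
  refine (Subgroup.isCyclic_iff_exists_zpowers_eq_top _).mpr ⟨a * b, le_antisymm ?_ ?_⟩
  · exact zpowers_le.mpr (mul_mem (subset_closure (by simp)) (subset_closure (by simp)))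
  · rw [closure_le, Set.pair_subset_iff]
    refine ⟨mem_zpowers_mul_of_coprime hab hcop, ?_⟩
    rw [hab.eq]
    exact mem_zpowers_mul_of_coprime hab.symm hcop.symm

theorem commute_of_mem_closure {s : Set G} {g h : G} (hg : g ∈ closure s)
    (hs : ∀ y ∈ s, Commute y h) : Commute g h := by
  have hle : closure s ≤ centralizer {h} :=
    (closure_le _).mpr fun y hy ↦ mem_centralizer_singleton_iff.mpr (hs y hy)
  exact mem_centralizer_singleton_iff.mp (hle hg)

end PowerGraph

section Hexagon

/-- The faces of the hexagon with vertex set `Fin 6`, listed cyclically: its vertices `{i}` at the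
even positions `2 * i` and its edges `{i, i + 1}` at the odd positions `2 * i + 1`. -/
def hexagonFace (k : Fin 12) : Finset (Fin 6) :=
  {Fin.ofNat 6 (k / 2), Fin.ofNat 6 ((k + 1 : ℕ) / 2)}

theorem hexagonFace_injective : Function.Injective hexagonFace := by
  decide

theorem fromRel_hexagonFace_subset :
    SimpleGraph.fromRel (fun k l ↦ hexagonFace k ⊆ hexagonFace l) = SimpleGraph.cycleGraph 12 := by
  ext k l
  revert k l
  decide

theorem hexagonFace_nonempty (k : Fin 12) : (hexagonFace k).Nonempty :=
  Finset.insert_nonempty _ _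

theorem exists_ne_and_not_adj_cycleGraph_six (i : Fin 6) :
    ∃ j, i ≠ j ∧ ¬(SimpleGraph.cycleGraph 6).Adj i j := by
  revert i
  decide

theorem exists_hexagonFace_eq (k : Fin 12) :
    ∃ i, hexagonFace k = {i} ∨ hexagonFace k = {i, i + 1} := by
  revert k
  decide

theorem mem_hexagonFace_of_forall_adj {k : Fin 12} {u : Fin 6}
    (h : ∀ w, (∀ v ∈ hexagonFace k, v = w ∨ (SimpleGraph.cycleGraph 6).Adj v w) →
      u = w ∨ (SimpleGraph.cycleGraph 6).Adj u w) : u ∈ hexagonFace k := by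
  revert k u
  decide

theorem exists_cycleGraph_embedding_powerGraph_of_hexagon {G : Type*} [Group G] {x : Fin 6 → G}
    (hcomm : ∀ i j, Commute (x i) (x j) ↔ i = j ∨ (SimpleGraph.cycleGraph 6).Adj i j)
    (hcop : ∀ i, (orderOf (x i)).Coprime (orderOf (x (i + 1)))) :
    ∃ e : SimpleGraph.cycleGraph 12 ↪g powerGraph G, ∀ k, e k ∉ center G := by
  let H (k : Fin 12) : Subgroup G := closure (x '' hexagonFace k)
  have mem_face {k u} (hu : x u ∈ H k) : u ∈ hexagonFace k :=
    mem_hexagonFace_of_forall_adj fun w hw ↦ (hcomm u w).mp <|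
      commute_of_mem_closure hu <| Set.forall_mem_image.mpr fun v hv ↦ (hcomm v w).mpr (hw v hv)
  have vertex_mem {k u} (hu : u ∈ hexagonFace k) : x u ∈ H k :=
    subset_closure (Set.mem_image_of_mem x hu)
  have le_iff (k l) : H k ≤ H l ↔ hexagonFace k ⊆ hexagonFace l :=
    ⟨fun h _ hu ↦ mem_face (h (vertex_mem hu)),
      fun h ↦ closure_mono (Set.image_mono (Finset.coe_subset.mpr h))⟩
  have H_injective : Function.Injective H := fun k l hkl ↦ hexagonFace_injective <|
    ((le_iff k l).mp hkl.le).antisymm ((le_iff l k).mp hkl.ge)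
  have H_cyclic (k) : IsCyclic (H k) := by
    obtain ⟨i, hi | hi⟩ := exists_hexagonFace_eq k
    · have hH : H k = zpowers (x i) := by simp [H, hi, zpowers_eq_closure]
      exact hH ▸ isCyclic_zpowers (x i)
    · have hH : H k = closure {x i, x (i + 1)} := by simp [H, hi, Set.image_pair]
      have hadj : (SimpleGraph.cycleGraph 6).Adj i (i + 1) := by simp [SimpleGraph.cycleGraph_adj]
      exact hH ▸ isCyclic_closure_pair_of_coprime ((hcomm _ _).mpr (.inr hadj)) (hcop i)
  have hcycle : SimpleGraph.fromRel (fun k l ↦ H k ≤ H l) = SimpleGraph.cycleGraph 12 := by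
    simp only [le_iff, fromRel_hexagonFace_subset]
  obtain ⟨e, he⟩ := exists_embedding_powerGraph_of_isCyclic H H_injective H_cyclic hcycle
  refine ⟨e, fun k hk ↦ ?_⟩
  obtain ⟨i, hi⟩ := hexagonFace_nonempty k
  have x_central : x i ∈ center G := zpowers_le.mpr hk (he k ▸ vertex_mem hi)
  obtain ⟨j, hne, hnadj⟩ := exists_ne_and_not_adj_cycleGraph_six i
  exact not_or.mpr ⟨hne, hnadj⟩ ((hcomm i j).mp (mem_center_iff.mp x_central (x j)).symm)

end Hexagon

section Ring

variable {R A : Type*} [CommRing R] [Ring A] [Algebra R A]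

theorem one_add_sub_one_smul_mul_of_isIdempotentElem {P : A} (hP : IsIdempotentElem P) (a b : R) :
    (1 + (a - 1) • P) * (1 + (b - 1) • P) = 1 + (a * b - 1) • P := by
  simp only [mul_add, add_mul, mul_one, one_mul, smul_mul_smul_comm, hP.eq]
  module

theorem one_add_pow_char_of_sq_eq_zero (p : ℕ) [hp : Fact p.Prime] [CharP A p] {x : A}
    (hx : x ^ 2 = 0) : (1 + x) ^ p = 1 := by
  rw [add_pow_char_of_commute p (.one_left x), one_pow, pow_eq_zero_of_le hp.out.two_le hx,
    add_zero]

theorem commute_one_add_left_iff {x y : A} : Commute (1 + x) y ↔ Commute x y := by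
  simp only [commute_iff_eq, add_mul, mul_add, one_mul, mul_one, add_right_inj]

theorem commute_smul_left_iff [IsDomain R] [Module.IsTorsionFree R A] {a : R} (ha : a ≠ 0)
    {x y : A} : Commute (a • x) y ↔ Commute x y := by
  simp only [commute_iff_eq, smul_mul_assoc, mul_smul_comm, smul_right_inj ha]

theorem coprime_orderOf_units_char [IsReduced R] (p : ℕ) [hp : Fact p.Prime] [CharP R p] {u : Rˣ}
    (hu : IsOfFinOrder u) : (orderOf u).Coprime p := by
  refine Nat.Coprime.symm <| hp.out.coprime_iff_not_dvd.mpr fun ⟨m, hm⟩ ↦ ?_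
  have hpow : u ^ m = 1 := by
    rw [← Units.val_inj, Units.val_pow_eq_pow_val, Units.val_one,
      ← ExpChar.pow_prime_pow_mul_eq_one_iff p 1 m, pow_one, ← hm, ← Units.val_pow_eq_pow_val,
      pow_orderOf_eq_one, Units.val_one]
  have hpos : 0 < p * m := hm ▸ hu.orderOf_pos
  have hle : p * m ≤ m := hm ▸ orderOf_le_of_pow_eq_one (Nat.pos_of_mul_pos_left hpos) hpow
  nlinarith [hp.out.two_le]

end Ring

section SpecialLinear

variable {n R : Type*} [Fintype n] [CommRing R]

theorem commute_vecMulVec_iff {v ψ v' ψ' : n → R} :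
    Commute (vecMulVec v ψ) (vecMulVec v' ψ') ↔
      vecMulVec v ((ψ ⬝ᵥ v') • ψ') = vecMulVec v' ((ψ' ⬝ᵥ v) • ψ) := by
  rw [commute_iff_eq, vecMulVec_mul_vecMulVec, vecMulVec_mul_vecMulVec]

variable [DecidableEq n]

theorem det_one_add_vecMulVec (v ψ : n → R) : (1 + vecMulVec v ψ).det = 1 + ψ ⬝ᵥ v := by
  rw [vecMulVec_eq Unit, det_one_add_replicateCol_mul_replicateRow]

theorem commute_coe_specialLinearGroup_iff {g h : SpecialLinearGroup n R} :
    Commute (g : Matrix n n R) h ↔ Commute g h :=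
  ⟨fun H ↦ Subtype.ext H, fun H ↦ H.map SpecialLinearGroup.coeMonoidHom⟩

/-- The transvection `1 + v ⊗ ψ`, with centre spanned by `v` and axis the kernel of `ψ`. -/
def slTransvection (v ψ : n → R) (h : ψ ⬝ᵥ v = 0) : SpecialLinearGroup n R :=
  ⟨1 + vecMulVec v ψ, by rw [det_one_add_vecMulVec, h, add_zero]⟩

theorem coe_slTransvection {v ψ : n → R} (h : ψ ⬝ᵥ v = 0) :
    (slTransvection v ψ h : Matrix n n R) = 1 + vecMulVec v ψ :=
  rfl

theorem slTransvection_pow_char [Nonempty n] (p : ℕ) [Fact p.Prime] [CharP R p] {v ψ : n → R}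
    (h : ψ ⬝ᵥ v = 0) : slTransvection v ψ h ^ p = 1 := by
  have hsq : vecMulVec v ψ ^ 2 = 0 := by
    rw [sq, vecMulVec_mul_vecMulVec, h, zero_smul, vecMulVec_zero]
  exact Subtype.ext (one_add_pow_char_of_sq_eq_zero p hsq)

/-- The matrix of the homology of determinant one with centre spanned by `c` and axis the kernel of
`φ`, where `φ ⬝ᵥ c = 1`, that acts on its axis as the scalar `u`. It then acts on its centre as
`u ^ (1 - card n)`. -/
def homologyMatrix (c φ : n → R) (u : Rˣ) : Matrix n n R :=
  (u : R) • (1 + (((u⁻¹ ^ Fintype.card n : Rˣ) : R) - 1) • vecMulVec c φ)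

theorem det_homologyMatrix {c φ : n → R} (h : φ ⬝ᵥ c = 1) (u : Rˣ) :
    (homologyMatrix c φ u).det = 1 := by
  rw [homologyMatrix, det_smul, ← smul_vecMulVec, det_one_add_vecMulVec, dotProduct_smul, h]
  simp [← mul_pow]

theorem homologyMatrix_mul {c φ : n → R} (h : φ ⬝ᵥ c = 1) (u w : Rˣ) :
    homologyMatrix c φ (u * w) = homologyMatrix c φ u * homologyMatrix c φ w := by
  have hidem : IsIdempotentElem (vecMulVec c φ) := by
    rw [IsIdempotentElem, vecMulVec_mul_vecMulVec, h, one_smul]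
  simp only [homologyMatrix]
  rw [smul_mul_smul_comm, one_add_sub_one_smul_mul_of_isIdempotentElem hidem, mul_inv, mul_pow,
    Units.val_mul, Units.val_mul]

/-- The group of homologies of determinant one with centre spanned by `c` and axis the kernel of
`φ`, parametrized by the scalar by which they act on the axis. -/
def slHomology (c φ : n → R) (h : φ ⬝ᵥ c = 1) : Rˣ →* SpecialLinearGroup n R where
  toFun u := ⟨homologyMatrix c φ u, det_homologyMatrix h u⟩
  map_one' := Subtype.ext (by simp [homologyMatrix])
  map_mul' u w := Subtype.ext (homologyMatrix_mul h u w)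

theorem coe_slHomology {c φ : n → R} (h : φ ⬝ᵥ c = 1) (u : Rˣ) :
    (slHomology c φ h u : Matrix n n R) = homologyMatrix c φ u :=
  rfl

theorem commute_slTransvection_iff {v ψ : n → R} (h : ψ ⬝ᵥ v = 0) {M : Matrix n n R} :
    Commute (slTransvection v ψ h : Matrix n n R) M ↔ Commute (vecMulVec v ψ) M := by
  rw [coe_slTransvection, commute_one_add_left_iff]

variable [IsDomain R]

theorem commute_slHomology_iff {c φ : n → R} (h : φ ⬝ᵥ c = 1) {u : Rˣ}
    (hu : u ^ Fintype.card n ≠ 1) {M : Matrix n n R} :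
    Commute (slHomology c φ h u : Matrix n n R) M ↔ Commute (vecMulVec c φ) M := by
  have hu' : ((u⁻¹ ^ Fintype.card n : Rˣ) : R) - 1 ≠ 0 := by
    rwa [sub_ne_zero, Ne, Units.val_eq_one, inv_pow, inv_eq_one]
  rw [coe_slHomology, homologyMatrix, commute_smul_left_iff u.ne_zero, commute_one_add_left_iff,
    commute_smul_left_iff hu']

theorem commute_slHomology_slHomology_iff {c φ φ' : n → R} (h : φ ⬝ᵥ c = 1) (h' : φ' ⬝ᵥ c = 1)
    {u w : Rˣ} (hu : u ^ Fintype.card n ≠ 1) (hw : w ^ Fintype.card n ≠ 1) :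
    Commute (slHomology c φ h u) (slHomology c φ' h' w) ↔ φ = φ' := by
  have hc : c ≠ 0 := by rintro rfl; simp at h
  rw [← commute_coe_specialLinearGroup_iff, commute_slHomology_iff h hu, Commute.symm_iff,
    commute_slHomology_iff h' hw, commute_vecMulVec_iff, h, h', one_smul, one_smul,
    ← sub_eq_zero, ← vecMulVec_sub, vecMulVec_eq_zero, or_iff_right hc, sub_eq_zero]

theorem commute_slHomology_slTransvection_iff {c φ v ψ : n → R} (h : φ ⬝ᵥ c = 1) (h' : ψ ⬝ᵥ v = 0)
    {u : Rˣ} (hu : u ^ Fintype.card n ≠ 1) (hψ : ψ ≠ 0) (hψc : ψ ⬝ᵥ c = 0) :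
    Commute (slHomology c φ h u) (slTransvection v ψ h') ↔ φ ⬝ᵥ v = 0 := by
  have hc : c ≠ 0 := by rintro rfl; simp at h
  rw [← commute_coe_specialLinearGroup_iff, commute_slHomology_iff h hu, Commute.symm_iff,
    commute_slTransvection_iff h', commute_vecMulVec_iff, hψc, zero_smul, vecMulVec_zero, eq_comm,
    vecMulVec_eq_zero, or_iff_right hc, smul_eq_zero, or_iff_left hψ]

theorem dotProduct_eq_zero_of_commute_slTransvection {v ψ v' ψ' : n → R} (h : ψ ⬝ᵥ v = 0)
    (h' : ψ' ⬝ᵥ v' = 0) (hψ : ψ ≠ 0)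
    (hcomm : Commute (slTransvection v ψ h) (slTransvection v' ψ' h')) :
    ψ ⬝ᵥ v' = 0 ∨ ψ' ⬝ᵥ v = 0 := by
  rw [← commute_coe_specialLinearGroup_iff, commute_slTransvection_iff, Commute.symm_iff,
    commute_slTransvection_iff, commute_vecMulVec_iff] at hcomm
  have happly : (ψ ⬝ᵥ v') • (ψ' ⬝ᵥ v) • ψ = 0 := by
    simpa only [vecMul_vecMulVec, h, zero_smul] using congrArg (ψ ᵥ* ·) hcomm
  simpa only [smul_eq_zero, hψ, or_false] using happly

end SpecialLinear

section Triangle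

variable {R : Type*} [CommRing R]

/-- The homology with centre `(1, 1, 1)` whose axis is the side `xᵢ = 0` of the coordinate
triangle. -/
def sideHomology (u : Rˣ) (i : Fin 3) : SpecialLinearGroup (Fin 3) R :=
  slHomology 1 (Pi.single i 1) (by simp) u

/-- The equation of the line through the `i`-th vertex of the coordinate triangle and
`(1, 1, 1)`. -/
def cevian (i : Fin 3) : Fin 3 → R :=
  Pi.single (i + 1) 1 - Pi.single (i + 2) 1

theorem cevian_dotProduct_one (i : Fin 3) : cevian i ⬝ᵥ (1 : Fin 3 → R) = 0 := by
  simp [cevian, sub_dotProduct]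

theorem cevian_dotProduct_single_self (i : Fin 3) :
    cevian i ⬝ᵥ (Pi.single i 1 : Fin 3 → R) = 0 := by
  fin_cases i <;> simp [cevian]

theorem cevian_dotProduct_single_eq_zero_iff [Nontrivial R] {i j : Fin 3} :
    cevian i ⬝ᵥ (Pi.single j 1 : Fin 3 → R) = 0 ↔ i = j := by
  fin_cases i <;> fin_cases j <;> simp [cevian]

theorem cevian_ne_zero [Nontrivial R] (i : Fin 3) : (cevian i : Fin 3 → R) ≠ 0 := by
  intro h
  have hi : i = i + 1 := cevian_dotProduct_single_eq_zero_iff (R := R).mp (by simp [h])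
  simp at hi

/-- The transvection with centre the `i`-th vertex of the coordinate triangle whose axis passes
through `(1, 1, 1)`. -/
def vertexTransvection (i : Fin 3) : SpecialLinearGroup (Fin 3) R :=
  slTransvection (Pi.single i 1) (cevian i) (cevian_dotProduct_single_self i)

variable [IsDomain R]

theorem commute_sideHomology_iff {u : Rˣ} (hu : u ^ 3 ≠ 1) {i j : Fin 3} :
    Commute (sideHomology u i) (sideHomology u j) ↔ i = j := by
  rw [sideHomology, sideHomology, commute_slHomology_slHomology_iff _ _ hu hu]
  exact ⟨fun h ↦ by simpa [Pi.single_apply] using congrFun h i, congrArg (Pi.single · 1)⟩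

theorem commute_sideHomology_vertexTransvection_iff {u : Rˣ} (hu : u ^ 3 ≠ 1) {i j : Fin 3} :
    Commute (sideHomology u i) (vertexTransvection j) ↔ i ≠ j := by
  rw [sideHomology, vertexTransvection, commute_slHomology_slTransvection_iff _ _ hu
    (cevian_ne_zero j) (cevian_dotProduct_one j)]
  simp [Pi.single_apply, eq_comm]

theorem commute_vertexTransvection_iff {i j : Fin 3} :
    Commute (vertexTransvection (R := R) i) (vertexTransvection j) ↔ i = j := by
  refine ⟨fun h ↦ ?_, fun h ↦ h ▸ .refl _⟩
  rcases dotProduct_eq_zero_of_commute_slTransvection _ _ (cevian_ne_zero i) h with h | h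
  · exact cevian_dotProduct_single_eq_zero_iff.mp h
  · exact (cevian_dotProduct_single_eq_zero_iff.mp h).symm

/-- The hexagon whose vertices are alternately the side homologies and the vertex transvections of
the coordinate triangle. Taking the `k`-th of them at side or vertex `k` modulo `3` makes each side
adjacent to the two vertices lying on it. -/
def triangleHexagon (u : Rˣ) (k : Fin 6) : SpecialLinearGroup (Fin 3) R :=
  if Even (k : ℕ) then sideHomology u (Fin.ofNat 3 k) else vertexTransvection (Fin.ofNat 3 k)

theorem commute_triangleHexagon_iff {u : Rˣ} (hu : u ^ 3 ≠ 1) (i j : Fin 6) :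
    Commute (triangleHexagon u i) (triangleHexagon u j) ↔
      i = j ∨ (SimpleGraph.cycleGraph 6).Adj i j := by
  unfold triangleHexagon
  split_ifs with hi hj hj
  · rw [commute_sideHomology_iff hu]
    decide +revert
  · rw [commute_sideHomology_vertexTransvection_iff hu]
    decide +revert
  · rw [Commute.symm_iff, commute_sideHomology_vertexTransvection_iff hu]
    decide +revert
  · rw [commute_vertexTransvection_iff]
    decide +revert

theorem coprime_orderOf_sideHomology_vertexTransvection (p : ℕ) [Fact p.Prime] [CharP R p] {u : Rˣ}
    (hu : IsOfFinOrder u) (i j : Fin 3) :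
    (orderOf (sideHomology u i)).Coprime (orderOf (vertexTransvection (R := R) j)) :=
  (coprime_orderOf_units_char p hu).of_dvd (orderOf_map_dvd (slHomology _ _ _) u)
    (orderOf_dvd_of_pow_eq_one (slTransvection_pow_char p _))

theorem coprime_orderOf_triangleHexagon (p : ℕ) [Fact p.Prime] [CharP R p] {u : Rˣ}
    (hu : IsOfFinOrder u) (i : Fin 6) :
    (orderOf (triangleHexagon u i)).Coprime (orderOf (triangleHexagon u (i + 1))) := by
  have hcop := coprime_orderOf_sideHomology_vertexTransvection p hu
  fin_cases i
  exacts [hcop 0 1, (hcop 2 1).symm, hcop 2 0, (hcop 1 0).symm, hcop 1 2, (hcop 0 2).symm]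

end Triangle

theorem exists_units_pow_three_ne_one (F : Type*) [Field F] [Fintype F]
    (hq : Fintype.card F ≠ 2 ∧ Fintype.card F ≠ 4) : ∃ u : Fˣ, u ^ 3 ≠ 1 := by
  by_contra! h
  have hdvd : Fintype.card F - 1 ∣ 3 := (FiniteField.forall_pow_eq_one_iff F 3).mp h
  rw [Nat.dvd_prime Nat.prime_three] at hdvd
  lia

theorem stmt8_general (R : Type*) [CommRing R] [IsDomain R] (p : ℕ) (hp : p.Prime)
    [CharP R p] (u : Rˣ) (hu : IsOfFinOrder u) (hu3 : u ^ 3 ≠ 1) :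
    (∃ (n : ℕ) (_ : 4 ≤ n)
        (e : SimpleGraph.cycleGraph n ↪g powerGraph (Matrix.SpecialLinearGroup (Fin 3) R)),
        ∀ i, e i ∉ Subgroup.center (Matrix.SpecialLinearGroup (Fin 3) R)) ∧
      ¬ IsChordal (powerGraph (Matrix.SpecialLinearGroup (Fin 3) R)) := by
  have : Fact p.Prime := ⟨hp⟩
  obtain ⟨e, he⟩ := exists_cycleGraph_embedding_powerGraph_of_hexagon
    (commute_triangleHexagon_iff hu3) (coprime_orderOf_triangleHexagon p hu)
  exact ⟨⟨12, by norm_num, e, he⟩, fun h ↦ (h 12 (by norm_num)).false e⟩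

theorem stmt8 (F : Type*) [Field F] [Fintype F]
    (hq : Fintype.card F ≠ 2 ∧ Fintype.card F ≠ 4) :
    (∃ (n : ℕ) (_ : 4 ≤ n)
        (e : SimpleGraph.cycleGraph n ↪g powerGraph (Matrix.SpecialLinearGroup (Fin 3) F)),
        ∀ i, e i ∉ Subgroup.center (Matrix.SpecialLinearGroup (Fin 3) F)) ∧
      ¬ IsChordal (powerGraph (Matrix.SpecialLinearGroup (Fin 3) F)) := by
  obtain ⟨u, hu⟩ := exists_units_pow_three_ne_one F hq
  exact stmt8_general F (ringChar F) (CharP.char_is_prime F _) u (isOfFinOrder_of_finite u) hu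
end

section
/- Let G be a finite group in which every element has prime power order (for every g ∈ G there exist a prime p and a natural number k with the order of g equal to p^k). Then the power graph of G is chordal. -/
/-!
In a cycle of length at least four no vertex is simplicial: its two neighbours are distinct and
not adjacent. So a graph is chordal as soon as every nonempty finite set of vertices contains a
vertex whose neighbours in that set form a clique. For the comparability graph of a preorder in
which all elements below a given one are comparable, any maximal element of the set will do. The
power graph is the comparability graph of the preorder `zpowers x ≤ zpowers y`, and the subgroups
of a cyclic group of prime power order form a chain because the divisors of `p ^ k` do.
-/

open Subgroup

section Chordal

variable {V : Type*}

theorem not_isClique_neighborSet_cycleGraph {n : ℕ} (hn : 4 ≤ n) (v : Fin n) :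
    ¬ (SimpleGraph.cycleGraph n).IsClique ((SimpleGraph.cycleGraph n).neighborSet v) := by
  obtain ⟨m, rfl⟩ := Nat.exists_eq_add_of_le' hn
  intro hclique
  have two_ne_zero : (1 + 1 : Fin (m + 4)) ≠ 0 := by
    simp [Fin.ext_iff, Fin.val_add, Nat.mod_eq_of_lt]
  have three_ne_zero : (1 + 1 + 1 : Fin (m + 4)) ≠ 0 := by
    simp [Fin.ext_iff, Fin.val_add, Nat.mod_eq_of_lt]
  have succ_sub_pred : v + 1 - (v - 1) = 1 + 1 := by abel
  have succ_ne_pred : v + 1 ≠ v - 1 := by rwa [← sub_ne_zero, succ_sub_pred]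
  have hadj : (SimpleGraph.cycleGraph (m + 4)).Adj (v + 1) (v - 1) :=
    hclique (by simp [SimpleGraph.cycleGraph_adj]) (by simp [SimpleGraph.cycleGraph_adj])
      succ_ne_pred
  rw [SimpleGraph.cycleGraph_adj, ← neg_sub (v + 1), succ_sub_pred] at hadj
  rcases hadj with two_eq_one | neg_two_eq_one
  · simp at two_eq_one
  · exact three_ne_zero (neg_eq_iff_add_eq_zero.mp neg_two_eq_one)

theorem isChordal_of_exists_isClique_neighborSet_inter {Γ : SimpleGraph V}
    (h : ∀ s : Set V, s.Finite → s.Nonempty → ∃ v ∈ s, Γ.IsClique (Γ.neighborSet v ∩ s)) :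
    IsChordal Γ := by
  refine fun n hn => ⟨fun f => ?_⟩
  have : NeZero n := ⟨by omega⟩
  obtain ⟨_, ⟨i, rfl⟩, hclique⟩ := h (Set.range f) (Set.finite_range f) (Set.range_nonempty f)
  refine not_isClique_neighborSet_cycleGraph hn i fun j hj k hk hjk => f.map_adj_iff.mp ?_
  exact hclique ⟨f.map_adj_iff.mpr hj, j, rfl⟩ ⟨f.map_adj_iff.mpr hk, k, rfl⟩ (f.injective.ne hjk)

theorem isChordal_fromRel_le [Preorder V] (h : ∀ z : V, IsChain (· ≤ ·) (Set.Iic z)) :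
    IsChordal (SimpleGraph.fromRel (fun x y : V => x ≤ y)) := by
  refine isChordal_of_exists_isClique_neighborSet_inter fun s hfin hne => ?_
  obtain ⟨v, hv⟩ := hfin.exists_maximal hne
  have le_of_mem {u : V}
      (hu : u ∈ (SimpleGraph.fromRel (fun x y : V => x ≤ y)).neighborSet v ∩ s) : u ≤ v :=
    hu.1.2.elim (hv.le_of_ge hu.2) id
  exact ⟨v, hv.prop, fun x hx y hy hxy => ⟨hxy, h v (le_of_mem hx) (le_of_mem hy) hxy⟩⟩

end Chordal

theorem dvd_or_dvd_of_dvd_prime_pow {p k m n : ℕ} (hp : p.Prime) (hm : m ∣ p ^ k)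
    (hn : n ∣ p ^ k) : m ∣ n ∨ n ∣ m := by
  obtain ⟨i, -, rfl⟩ := (Nat.dvd_prime_pow hp).mp hm
  obtain ⟨j, -, rfl⟩ := (Nat.dvd_prime_pow hp).mp hn
  exact (le_total i j).imp (pow_dvd_pow p) (pow_dvd_pow p)

section ZPowers

variable {G : Type*} [Group G]

theorem zpow_mem_zpowers_zpow_iff {g : G} {a b : ℤ} :
    g ^ a ∈ zpowers (g ^ b) ↔ (b.gcd (orderOf g) : ℤ) ∣ a := by
  simp_rw [Int.coe_gcd, gcd_dvd_iff_exists, ← sub_eq_iff_eq_add', ← dvd_def,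
    ← Int.modEq_iff_dvd, ← zpow_eq_zpow_iff_modEq, zpow_mul, ← mem_zpowers_iff]

theorem mem_zpowers_or_mem_zpowers_of_orderOf_eq_prime_pow {x y z : G} {p k : ℕ} (hp : p.Prime)
    (hz : orderOf z = p ^ k) (hx : x ∈ zpowers z) (hy : y ∈ zpowers z) :
    x ∈ zpowers y ∨ y ∈ zpowers x := by
  obtain ⟨a, rfl⟩ := mem_zpowers_iff.mp hx
  obtain ⟨b, rfl⟩ := mem_zpowers_iff.mp hy
  simp only [zpow_mem_zpowers_zpow_iff, hz]
  have gcd_dvd_gcd :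
      b.gcd (p ^ k : ℕ) ∣ a.gcd (p ^ k : ℕ) ∨ a.gcd (p ^ k : ℕ) ∣ b.gcd (p ^ k : ℕ) :=
    dvd_or_dvd_of_dvd_prime_pow hp (Int.gcd_dvd_natAbs_right b _) (Int.gcd_dvd_natAbs_right a _)
  exact gcd_dvd_gcd.imp (fun h => (Int.natCast_dvd_natCast.mpr h).trans (Int.gcd_dvd_left a _))
    fun h => (Int.natCast_dvd_natCast.mpr h).trans (Int.gcd_dvd_left b _)

end ZPowers

theorem stmt10_general (G : Type*) [Group G]
    (heppo : ∀ g : G, ∃ (p k : ℕ), p.Prime ∧ orderOf g = p ^ k) :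
    IsChordal (powerGraph G) := by
  let _ : Preorder G := Preorder.lift zpowers
  have le_iff {x y : G} : x ≤ y ↔ x ∈ zpowers y := zpowers_le
  have powerGraph_eq : powerGraph G = SimpleGraph.fromRel (fun x y : G => x ≤ y) := by
    simp only [powerGraph, le_iff]
  rw [powerGraph_eq]
  refine isChordal_fromRel_le fun z x hx y hy _ => ?_
  obtain ⟨p, k, hp, hz⟩ := heppo z
  simp only [Set.mem_Iic, le_iff] at hx hy ⊢
  exact mem_zpowers_or_mem_zpowers_of_orderOf_eq_prime_pow hp hz hx hy

theorem stmt10 (G : Type*) [Group G] [Fintype G]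
    (heppo : ∀ g : G, ∃ (p k : ℕ), p.Prime ∧ orderOf g = p ^ k) :
    IsChordal (powerGraph G) :=
  stmt10_general G heppo
end
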